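/- arXiv:2104.03138 — 2 statements merged into one kernel-verified Lean document; each statement's English description precedes it below -/
import Mathlib

section
/- Every colored neighborhood class K (equivalence class of the relation ∼) of a c-edge-colored graph G is either an independent set or a clique all of whose edges have the same color. -/
/-!
Two vertices related by `∼` look the same, colour by colour, from every third vertex. Applied to
members `a`, `b` of the class of `v` with `a`, `b`, `v` distinct, this says that `ab`, `vb` and `va`
carry the same colour or are all non-edges: compare `a` with `v` as seen from `b`, and `b` with `v`
as seen from `a`. So one edge of colour `i` inside the class forces `v` to be joined to every other
member by colour `i`, and hence every two members to be joined by colour `i`.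
-/

/-- A `c`-edge-colored graph: a simple graph together with a color in `Fin c`
for each pair of vertices (only relevant on edges), symmetric in its arguments. -/
structure EColGraph (V : Type) (c : ℕ) where
  graph : SimpleGraph V
  col : V → V → Fin c
  col_symm : ∀ u v, col u v = col v u

namespace EColGraph

variable {V : Type} {c : ℕ}

/-- Delete a set of edges from an edge-colored graph (remaining edges keep their colors). -/
def del (G : EColGraph V c) (S : Set (Sym2 V)) : EColGraph V c :=
  { graph := G.graph.deleteEdges S, col := G.col, col_symm := G.col_symm }

/-- `f` embeds `F` into `G` as an induced subgraph, preserving edge colors. -/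
def IsInducedCopy {W : Type} (F : EColGraph W c) (G : EColGraph V c) (f : W → V) : Prop :=
  Function.Injective f ∧
    (∀ a b : W, F.graph.Adj a b ↔ G.graph.Adj (f a) (f b)) ∧
    (∀ a b : W, F.graph.Adj a b → G.col (f a) (f b) = F.col a b)

/-- `f` embeds `F` into `G` as a (not necessarily induced) subgraph, preserving edge colors. -/
def IsSubCopy {W : Type} (F : EColGraph W c) (G : EColGraph V c) (f : W → V) : Prop :=
  Function.Injective f ∧
    (∀ a b : W, F.graph.Adj a b → G.graph.Adj (f a) (f b)) ∧
    (∀ a b : W, F.graph.Adj a b → G.col (f a) (f b) = F.col a b)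

end EColGraph

variable {V : Type} {c : ℕ}

/-- `N^i(v)`: the vertices joined to `v` by an edge of color `i`. -/
def colNbhd (G : EColGraph V c) (i : Fin c) (v : V) : Set V :=
  {u | G.graph.Adj v u ∧ G.col v u = i}

/-- `N^i[v] = N^i(v) ∪ {v}`. -/
def colNbhdCl (G : EColGraph V c) (i : Fin c) (v : V) : Set V :=
  insert v (colNbhd G i v)

/-- `u ∼ v`: `u` and `v` belong to the same colored neighborhood class. -/
def Sim (G : EColGraph V c) (u v : V) : Prop :=
  (∃ i : Fin c, colNbhdCl G i u = colNbhdCl G i v ∧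
    ∀ j : Fin c, j ≠ i → colNbhd G j u = colNbhd G j v) ∨
  (∀ j : Fin c, colNbhd G j u = colNbhd G j v)

theorem mem_colNbhd_comm (G : EColGraph V c) {i : Fin c} {u w : V} :
    u ∈ colNbhd G i w ↔ w ∈ colNbhd G i u := by
  simp only [colNbhd, Set.mem_ofPred_eq, G.graph.adj_comm w u, G.col_symm w u]

/-- A vertex other than `u` and `v` does not distinguish `u` from `v` when `u ∼ v`; the closed
neighbourhoods in `Sim` differ from the open ones only at `u` and `v` themselves. -/
theorem Sim.mem_colNbhd_iff {G : EColGraph V c} {u v x : V} (h : Sim G u v)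
    (hu : x ≠ u) (hv : x ≠ v) (j : Fin c) : x ∈ colNbhd G j u ↔ x ∈ colNbhd G j v := by
  rcases h with ⟨i, hcl, hop⟩ | h
  · by_cases hj : j = i
    · subst hj
      have hx := Set.ext_iff.mp hcl x
      simpa [colNbhdCl, hu, hv] using hx
    · rw [hop j hj]
  · rw [h j]

theorem stmt6 (G : EColGraph V c) (K : Set V) (v : V)
    (hK : K = {u | Sim G u v}) :
    (∀ a ∈ K, ∀ b ∈ K, ¬ G.graph.Adj a b) ∨
    (∃ i : Fin c, ∀ a ∈ K, ∀ b ∈ K, a ≠ b → G.graph.Adj a b ∧ G.col a b = i) := by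
  subst hK
  by_cases hind : ∀ a ∈ {u | Sim G u v}, ∀ b ∈ {u | Sim G u v}, ¬ G.graph.Adj a b
  · exact Or.inl hind
  right
  push Not at hind
  obtain ⟨a, ha, b, hb, hab⟩ := hind
  have hne : a ≠ b := hab.ne
  have key : ∀ {x y : V}, Sim G x v → x ≠ y → y ≠ v → ∀ j,
      (y ∈ colNbhd G j x ↔ y ∈ colNbhd G j v) :=
    fun hx hxy hy j => hx.mem_colNbhd_iff hxy.symm hy j
  -- `vx` agrees with `yx` because `y ∼ v`, and `xy` agrees with `vy` because `x ∼ v`.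
  have key' : ∀ {x y : V}, Sim G x v → Sim G y v → x ≠ y → x ≠ v → y ≠ v → ∀ j,
      (x ∈ colNbhd G j v ↔ y ∈ colNbhd G j v) := fun hx hy hxy hxv hyv j =>
    (key hy hxy.symm hxv j).symm.trans ((mem_colNbhd_comm G).trans (key hx hxy hyv j))
  have hedge : b ∈ colNbhd G (G.col a b) a := ⟨hab, rfl⟩
  generalize G.col a b = i at hedge
  obtain ⟨d, hd, hdv, hdi⟩ : ∃ d, Sim G d v ∧ d ≠ v ∧ d ∈ colNbhd G i v := by
    by_cases hbv : b = v
    · subst hbv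
      exact ⟨a, ha, hne, (mem_colNbhd_comm G).mp hedge⟩
    · exact ⟨b, hb, hbv, (key ha hne hbv i).mp hedge⟩
  have hall : ∀ x, Sim G x v → x ≠ v → x ∈ colNbhd G i v := by
    intro x hx hxv
    by_cases hxd : x = d
    · rwa [hxd]
    · exact (key' hx hd hxd hxv hdv i).mpr hdi
  refine ⟨i, fun x hx y hy hxy => ?_⟩
  change y ∈ colNbhd G i x
  by_cases hyv : y = v
  · subst hyv
    exact (mem_colNbhd_comm G).mp (hall x hx hxy)
  · exact (key hx hxy hyv i).mpr (hall y hy hyv)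
end

section
/- A bicolored graph G belongs to the class 𝒯 if and only if every connected component of G is either an rb-fence or an rb-clique-star. -/
def blue : Fin 2 := 0
def red : Fin 2 := 1

variable {V : Type}

/-- The subgraph of a bicolored graph formed by the edges of color `i`. -/
def mono (G : EColGraph V 2) (i : Fin 2) : SimpleGraph V :=
  SimpleGraph.fromRel (fun u v => G.graph.Adj u v ∧ G.col u v = i)

/-- A cluster graph: every connected component is a clique. -/
def IsClusterGraph (H : SimpleGraph V) : Prop :=
  ∀ u v : V, H.Reachable u v → u = v ∨ H.Adj u v

/-- A double cluster graph: both the blue subgraph and the red subgraph are cluster graphs. -/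
def DoubleCluster (G : EColGraph V 2) : Prop :=
  IsClusterGraph (mono G blue) ∧ IsClusterGraph (mono G red)

/-- `G` contains an induced `P_4` with subsequent edge colors red, blue, red. -/
def HasRBRPath (G : EColGraph V 2) : Prop :=
  ∃ a b c d : V, a ≠ b ∧ a ≠ c ∧ a ≠ d ∧ b ≠ c ∧ b ≠ d ∧ c ≠ d ∧
    G.graph.Adj a b ∧ G.col a b = red ∧
    G.graph.Adj b c ∧ G.col b c = blue ∧
    G.graph.Adj c d ∧ G.col c d = red ∧
    ¬ G.graph.Adj a c ∧ ¬ G.graph.Adj a d ∧ ¬ G.graph.Adj b d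

/-- The class `𝒯`: double cluster graphs with no induced red-blue-red `P_4`. -/
def InT (G : EColGraph V 2) : Prop := DoubleCluster G ∧ ¬ HasRBRPath G

/-- `X` is a blue clique of `G`. -/
def BlueClique (G : EColGraph V 2) (X : Set V) : Prop :=
  ∀ a ∈ X, ∀ b ∈ X, a ≠ b → G.graph.Adj a b ∧ G.col a b = blue

/-- `X` is a red clique of `G`. -/
def RedClique (G : EColGraph V 2) (X : Set V) : Prop :=
  ∀ a ∈ X, ∀ b ∈ X, a ≠ b → G.graph.Adj a b ∧ G.col a b = red

/-- The vertex set `Z` (together with the edges of `G` inside it) is an rb-fence: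
two disjoint blue cliques of size at least two whose union is `Z`, with the red
edges forming a nonempty matching between them, no other edges, and no edges
leaving `Z`. -/
def IsRBFenceOn (G : EColGraph V 2) (Z : Set V) : Prop :=
  ∃ X Y : Set V, X ∪ Y = Z ∧ Disjoint X Y ∧
    2 ≤ X.ncard ∧ 2 ≤ Y.ncard ∧
    BlueClique G X ∧ BlueClique G Y ∧
    (∃ a ∈ X, ∃ b ∈ Y, G.graph.Adj a b) ∧
    (∀ a ∈ X, ∀ b ∈ Y, G.graph.Adj a b → G.col a b = red) ∧
    (∀ a ∈ X, ∀ b ∈ Y, ∀ b' ∈ Y, G.graph.Adj a b → G.graph.Adj a b' → b = b') ∧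
    (∀ b ∈ Y, ∀ a ∈ X, ∀ a' ∈ X, G.graph.Adj a b → G.graph.Adj a' b → a = a') ∧
    (∀ a ∈ Z, ∀ b : V, G.graph.Adj a b → b ∈ Z)

/-- The vertex set `Z` (together with the edges of `G` inside it) is an
rb-clique-star: one red clique `X` together with pairwise disjoint blue cliques,
each intersecting `X` in exactly one vertex, with no further vertices or edges,
and no edges leaving `Z`. -/
def IsRBCliqueStarOn (G : EColGraph V 2) (Z : Set V) : Prop :=
  ∃ (X : Set V) (B : V → Set V), X ⊆ Z ∧ RedClique G X ∧
    (∀ x ∈ X, x ∈ B x) ∧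
    (∀ x ∈ X, B x ∩ X = {x}) ∧
    (∀ x ∈ X, BlueClique G (B x)) ∧
    (∀ x ∈ X, ∀ y ∈ X, x ≠ y → Disjoint (B x) (B y)) ∧
    Z = X ∪ ⋃ x ∈ X, B x ∧
    (∀ a ∈ Z, ∀ b ∈ Z, G.graph.Adj a b →
      (a ∈ X ∧ b ∈ X) ∨ ∃ x ∈ X, a ∈ B x ∧ b ∈ B x) ∧
    (∀ a ∈ Z, ∀ b : V, G.graph.Adj a b → b ∈ Z)

/-! ### Color classes and transitivity -/

/-- `u` and `v` are joined by an edge of color `i`. -/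
def CAdj (G : EColGraph V 2) (i : Fin 2) (u v : V) : Prop :=
  G.graph.Adj u v ∧ G.col u v = i

/-- The color class of `u`: the vertex `u` together with its neighbors along color `i`. -/
def colorClass (G : EColGraph V 2) (i : Fin 2) (u : V) : Set V :=
  {w | u = w ∨ CAdj G i u w}

/-- Two consecutive edges of color `i` with distinct ends are closed to a triangle of color `i`. -/
def ColorTrans (G : EColGraph V 2) (i : Fin 2) : Prop :=
  ∀ a b c, a ≠ c → CAdj G i a b → CAdj G i b c → CAdj G i a c

lemma CAdj.symm {G : EColGraph V 2} {i : Fin 2} {u v : V} (h : CAdj G i u v) : CAdj G i v u :=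
  ⟨h.1.symm, by rw [G.col_symm]; exact h.2⟩

lemma CAdj.ne {G : EColGraph V 2} {i : Fin 2} {u v : V} (h : CAdj G i u v) : u ≠ v :=
  h.1.ne

lemma not_blue_and_red {G : EColGraph V 2} {u v : V} (hb : CAdj G blue u v)
    (hr : CAdj G red u v) : False := by
  have h := hb.2.symm.trans hr.2
  exact absurd h (by decide)

lemma adj_iff {G : EColGraph V 2} {u v : V} :
    G.graph.Adj u v ↔ CAdj G blue u v ∨ CAdj G red u v := by
  have h : ∀ c : Fin 2, c = blue ∨ c = red := by decide
  have := h (G.col u v)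
  unfold CAdj
  tauto

lemma mono_adj {G : EColGraph V 2} {i : Fin 2} {u v : V} :
    (mono G i).Adj u v ↔ CAdj G i u v := by
  unfold mono
  rw [SimpleGraph.fromRel_adj]
  constructor
  · rintro ⟨_, h | h⟩
    · exact h
    · exact CAdj.symm h
  · exact fun h => ⟨h.ne, Or.inl h⟩

lemma isClusterGraph_mono_iff {G : EColGraph V 2} {i : Fin 2} :
    IsClusterGraph (mono G i) ↔ ColorTrans G i := by
  constructor
  · intro h a b c hac hab hbc
    have := h a c ((mono_adj.2 hab).reachable.trans (mono_adj.2 hbc).reachable)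
    exact mono_adj.1 (this.resolve_left hac)
  · rintro h u v ⟨p⟩
    induction p with
    | nil => exact Or.inl rfl
    | @cons a b c hab _ ih =>
      by_cases hac : a = c
      · exact Or.inl hac
      · rcases ih with rfl | hbc
        · exact Or.inr hab
        · exact Or.inr (mono_adj.2 (h a b c hac (mono_adj.1 hab) (mono_adj.1 hbc)))

lemma reachable_mem_of_closed {G : EColGraph V 2} {S : Set V} {w u : V}
    (hcl : ∀ a ∈ S, ∀ b, G.graph.Adj a b → b ∈ S) (hw : w ∈ S) (h : G.graph.Reachable w u) :
    u ∈ S := by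
  obtain ⟨p⟩ := h
  induction p with
  | nil => exact hw
  | cons hab _ ih => exact ih (hcl _ hw _ hab)

/-- A closed set of vertices reachable from its element `w` is the component of any `v`
connected to `w`. -/
lemma eq_component {G : EColGraph V 2} {S : Set V} {v w : V}
    (hcl : ∀ a ∈ S, ∀ b, G.graph.Adj a b → b ∈ S) (hw : w ∈ S)
    (hS : ∀ a ∈ S, G.graph.Reachable w a) (hvw : G.graph.Reachable v w) :
    S = {u | G.graph.Reachable v u} := by
  ext u
  exact ⟨fun hu => hvw.trans (hS u hu),
    fun hu => reachable_mem_of_closed hcl hw (hvw.symm.trans hu)⟩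

lemma clique_colorClass {G : EColGraph V 2} {i : Fin 2} (h : ColorTrans G i) (u : V) :
    ∀ a ∈ colorClass G i u, ∀ b ∈ colorClass G i u, a ≠ b → CAdj G i a b := by
  rintro a (rfl | ha) b (rfl | hb) hab
  · exact absurd rfl hab
  · exact hb
  · exact ha.symm
  · exact h a u b hab ha.symm hb

lemma mem_colorClass_of_cAdj {G : EColGraph V 2} {i : Fin 2} (h : ColorTrans G i) {u a b : V}
    (ha : a ∈ colorClass G i u) (hab : CAdj G i a b) : b ∈ colorClass G i u := by
  rcases ha with rfl | ha
  · exact Or.inr hab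
  · by_cases hub : u = b
    · exact Or.inl hub
    · exact Or.inr (h u a b hub ha hab)

lemma colorClass_reachable {G : EColGraph V 2} {i : Fin 2} {u a : V}
    (ha : a ∈ colorClass G i u) : G.graph.Reachable u a := by
  rcases ha with rfl | ha
  · exact SimpleGraph.Reachable.refl _
  · exact ha.1.reachable

/-! ### Structure of the components of a graph in `𝒯` -/

/-- Red neighbors of the two ends of a blue edge are themselves joined by a blue edge; this is
where the absence of induced red-blue-red paths enters. -/
lemma blue_of_red_red {G : EColGraph V 2} (hb : ColorTrans G blue) (hr : ColorTrans G red)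
    (hP : ¬ HasRBRPath G) {p q p' q' : V} (hpq : CAdj G blue p q) (hp : CAdj G red p p')
    (hq : CAdj G red q q') : CAdj G blue p' q' := by
  have hqp' : ¬ G.graph.Adj p' q := by
    rw [adj_iff]
    rintro (h | h)
    · exact not_blue_and_red (hb p q p' hp.ne hpq h.symm) hp
    · exact not_blue_and_red hpq (hr p p' q hpq.ne hp h)
  have hpq' : ¬ G.graph.Adj p q' := by
    rw [adj_iff]
    rintro (h | h)
    · exact not_blue_and_red (hb q p q' hq.ne hpq.symm h) hq
    · exact not_blue_and_red hpq (hr p q' q hpq.ne h hq.symm)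
  have hne : p' ≠ q' := by
    rintro rfl
    exact hqp' hq.1.symm
  have hadj : G.graph.Adj p' q' := by
    by_contra h
    refine hP ⟨p', p, q, q', hp.ne.symm, ?_, hne, hpq.ne, ?_, hq.ne,
      hp.1.symm, hp.symm.2, hpq.1, hpq.2, hq.1, hq.2, hqp', h, hpq'⟩
    · rintro rfl
      exact not_blue_and_red hpq hp
    · rintro rfl
      exact not_blue_and_red hpq.symm hq
  rcases adj_iff.1 hadj with h | h
  · exact h
  · exact absurd (hr p p' q' (by rintro rfl; exact not_blue_and_red hpq.symm hq) hp h).1 hpq'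

/-- If `p` and `q` are joined by a blue edge and have red neighbors `p'` and `q'`, every red edge
leaving the blue class of `p` ends in the blue class of `p'`. -/
lemma red_nbr_mem {G : EColGraph V 2} (hb : ColorTrans G blue) (hr : ColorTrans G red)
    (hP : ¬ HasRBRPath G) {p q p' q' a b : V} (hpq : CAdj G blue p q) (hp : CAdj G red p p')
    (hq : CAdj G red q q') (ha : a ∈ colorClass G blue p) (hab : CAdj G red a b) :
    b ∈ colorClass G blue p' := by
  rcases ha with rfl | ha
  · have h1 := blue_of_red_red hb hr hP hpq hp hq
    have h2 := blue_of_red_red hb hr hP hpq hab hq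
    by_cases h : p' = b
    · exact Or.inl h
    · exact Or.inr (hb _ _ _ h h1 h2.symm)
  · exact Or.inr (blue_of_red_red hb hr hP ha hp hab)

/-- A component with a blue edge `pq` and red edges leaving both of its ends is the fence on the
blue class of `p` together with the blue class of the red neighbor of `p`. -/
lemma fence_of_red_red [Fintype V] {G : EColGraph V 2} (hb : ColorTrans G blue)
    (hr : ColorTrans G red) (hP : ¬ HasRBRPath G) {v p q p' q' : V} (hpq : CAdj G blue p q)
    (hp : CAdj G red p p') (hq : CAdj G red q q') (hv : G.graph.Reachable v p) :
    IsRBFenceOn G {u | G.graph.Reachable v u} := by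
  have hpq' := blue_of_red_red hb hr hP hpq hp hq
  have two_le : ∀ {x y : V}, CAdj G blue x y → 2 ≤ (colorClass G blue x).ncard := by
    intro x y h
    rw [← Set.ncard_pair h.ne]
    refine Set.ncard_le_ncard ?_ (Set.toFinite _)
    rintro z (rfl | rfl)
    · exact Or.inl rfl
    · exact Or.inr h
  have hcl : ∀ a ∈ colorClass G blue p ∪ colorClass G blue p', ∀ b, G.graph.Adj a b →
      b ∈ colorClass G blue p ∪ colorClass G blue p' := by
    rintro a (ha | ha) b hab <;> rcases adj_iff.1 hab with h | h
    · exact Or.inl (mem_colorClass_of_cAdj hb ha h)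
    · exact Or.inr (red_nbr_mem hb hr hP hpq hp hq ha h)
    · exact Or.inr (mem_colorClass_of_cAdj hb ha h)
    · exact Or.inl (red_nbr_mem hb hr hP hpq' hp.symm hq.symm ha h)
  have hZ := eq_component hcl (Or.inl (Or.inl rfl)) (by
    rintro a (ha | ha)
    · exact colorClass_reachable ha
    · exact hp.1.reachable.trans (colorClass_reachable ha)) hv
  have hdis : ∀ z ∈ colorClass G blue p, z ∉ colorClass G blue p' := by
    intro z hz hz'
    have : p' ∈ colorClass G blue p := by
      rcases hz' with rfl | h
      · exact hz
      · exact mem_colorClass_of_cAdj hb hz h.symm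
    rcases this with rfl | h
    · exact hp.ne rfl
    · exact not_blue_and_red h hp
  have hcross : ∀ a ∈ colorClass G blue p, ∀ b ∈ colorClass G blue p', G.graph.Adj a b →
      CAdj G red a b := by
    intro a ha b hb' hab
    rcases adj_iff.1 hab with h | h
    · exact absurd hb' (hdis b (mem_colorClass_of_cAdj hb ha h))
    · exact h
  rw [← hZ]
  refine ⟨colorClass G blue p, colorClass G blue p', rfl, Set.disjoint_left.2 hdis,
    two_le hpq, two_le hpq', clique_colorClass hb p, clique_colorClass hb p',
    ⟨p, Or.inl rfl, p', Or.inl rfl, hp.1⟩, fun a ha b hb' h => (hcross a ha b hb' h).2,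
    ?_, ?_, hcl⟩
  · intro a ha b hb1 c hc h1 h2
    by_contra hne
    exact not_blue_and_red (clique_colorClass hb p' b hb1 c hc hne)
      (hr b a c hne (hcross a ha b hb1 h1).symm (hcross a ha c hc h2))
  · intro b hb1 a ha c hc h1 h2
    by_contra hne
    exact not_blue_and_red (clique_colorClass hb p a ha c hc hne)
      (hr a b c hne (hcross a ha b hb1 h1) (hcross c hc b hb1 h2).symm)

/-- If no vertex joined by a blue edge to the red class of `w` has a red neighbor, the component
of `w` is the clique-star around that red class. -/
lemma star_of_red_class {G : EColGraph V 2} (hb : ColorTrans G blue) (hr : ColorTrans G red)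
    {v w : V} (hv : G.graph.Reachable v w)
    (hw : ∀ x ∈ colorClass G red w, ∀ y, CAdj G blue x y → ∀ z, ¬ CAdj G red y z) :
    IsRBCliqueStarOn G {u | G.graph.Reachable v u} := by
  have hcap : ∀ x ∈ colorClass G red w, ∀ y ∈ colorClass G red w,
      y ∈ colorClass G blue x → x = y := by
    rintro x hx y hy (rfl | h)
    · rfl
    · exact absurd h fun h => not_blue_and_red h (clique_colorClass hr w x hx y hy h.ne)
  have hcl : ∀ a ∈ colorClass G red w ∪ ⋃ x ∈ colorClass G red w, colorClass G blue x,
      ∀ b, G.graph.Adj a b →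
      (a ∈ colorClass G red w ∧ b ∈ colorClass G red w) ∨
        ∃ x ∈ colorClass G red w, a ∈ colorClass G blue x ∧ b ∈ colorClass G blue x := by
    intro a ha b hab
    have ha' : ∃ x ∈ colorClass G red w, a ∈ colorClass G blue x := by
      rcases ha with ha | ha
      · exact ⟨a, ha, Or.inl rfl⟩
      · simpa using ha
    obtain ⟨x, hx, hxa⟩ := ha'
    rcases adj_iff.1 hab with h | h
    · exact Or.inr ⟨x, hx, hxa, mem_colorClass_of_cAdj hb hxa h⟩
    · rcases hxa with rfl | hxa
      · exact Or.inl ⟨hx, mem_colorClass_of_cAdj hr hx h⟩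
      · exact absurd h (hw x hx a hxa b)
  have hcl' : ∀ a ∈ colorClass G red w ∪ ⋃ x ∈ colorClass G red w, colorClass G blue x,
      ∀ b, G.graph.Adj a b →
        b ∈ colorClass G red w ∪ ⋃ x ∈ colorClass G red w, colorClass G blue x := by
    intro a ha b hab
    rcases hcl a ha b hab with h | ⟨x, hx, _, h⟩
    · exact Or.inl h.2
    · exact Or.inr (Set.mem_biUnion hx h)
  have hZ := eq_component hcl' (Or.inl (Or.inl rfl)) (by
    rintro a (ha | ha)
    · exact colorClass_reachable ha
    · obtain ⟨x, hx, hxa⟩ := Set.mem_iUnion₂.1 ha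
      exact (colorClass_reachable hx).trans (colorClass_reachable hxa)) hv
  rw [← hZ]
  refine ⟨colorClass G red w, colorClass G blue, Set.subset_union_left,
    clique_colorClass hr w, fun x _ => Or.inl rfl, ?_, fun x _ => clique_colorClass hb x,
    ?_, rfl, fun a ha b _ => hcl a ha b, hcl'⟩
  · intro x hx
    ext y
    constructor
    · exact fun h => (hcap x hx y h.2 h.1).symm
    · rintro rfl
      exact ⟨Or.inl rfl, hx⟩
  · intro x hx y hy hxy
    refine Set.disjoint_left.2 fun z hz hz' => hxy (hcap x hx y hy ?_)
    rcases hz' with rfl | h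
    · exact hz
    · exact mem_colorClass_of_cAdj hb hz h.symm

/-! ### Fences and clique-stars belong to `𝒯` -/

/-- A vertex set carrying a fence or a clique-star satisfies the local conditions defining `𝒯`:
transitivity of either color, and a chord for every red-blue-red path. -/
lemma local_conditions {G : EColGraph V 2} {Z : Set V}
    (h : IsRBFenceOn G Z ∨ IsRBCliqueStarOn G Z) :
    (∀ i : Fin 2, ∀ a ∈ Z, ∀ b ∈ Z, ∀ c ∈ Z, a ≠ c → CAdj G i a b → CAdj G i b c → CAdj G i a c) ∧
    (∀ a ∈ Z, ∀ b ∈ Z, ∀ c ∈ Z, ∀ d ∈ Z, CAdj G red a b → CAdj G blue b c → CAdj G red c d →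
      a = d ∨ G.graph.Adj a c ∨ G.graph.Adj a d ∨ G.graph.Adj b d) := by
  rcases h with h | h
  · obtain ⟨X, Y, rfl, hXY, -, -, hX, hY, -, hcol, hm, hm', -⟩ := h
    rw [Set.disjoint_left] at hXY
    -- Blue edges join vertices on the same side, red edges vertices on different sides.
    have hblue : ∀ a ∈ X ∪ Y, ∀ b ∈ X ∪ Y, CAdj G blue a b →
        (a ∈ X ∧ b ∈ X) ∨ (a ∈ Y ∧ b ∈ Y) := by
      rintro a (ha | ha) b (hb | hb) hab
      · exact Or.inl ⟨ha, hb⟩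
      · exact (not_blue_and_red hab ⟨hab.1, hcol a ha b hb hab.1⟩).elim
      · exact (not_blue_and_red hab.symm ⟨hab.1.symm, hcol b hb a ha hab.1.symm⟩).elim
      · exact Or.inr ⟨ha, hb⟩
    have hred : ∀ a ∈ X ∪ Y, ∀ b ∈ X ∪ Y, CAdj G red a b →
        (a ∈ X ∧ b ∈ Y) ∨ (a ∈ Y ∧ b ∈ X) := by
      rintro a (ha | ha) b (hb | hb) hab
      · exact (not_blue_and_red (hX a ha b hb hab.ne) hab).elim
      · exact Or.inl ⟨ha, hb⟩
      · exact Or.inr ⟨ha, hb⟩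
      · exact (not_blue_and_red (hY a ha b hb hab.ne) hab).elim
    refine ⟨fun i a ha b hb c hc hac hab hbc => ?_, fun a ha b hb c hc d hd hab hbc hcd => ?_⟩
    · rcases (by decide : ∀ i : Fin 2, i = blue ∨ i = red) i with rfl | rfl
      · rcases hblue a ha b hb hab with ⟨h1, h2⟩ | ⟨h1, h2⟩ <;>
          rcases hblue b hb c hc hbc with ⟨h3, h4⟩ | ⟨h3, h4⟩
        · exact hX a h1 c h4 hac
        · exact (hXY h2 h3).elim
        · exact (hXY h3 h2).elim
        · exact hY a h1 c h4 hac
      · rcases hred a ha b hb hab with ⟨h1, h2⟩ | ⟨h1, h2⟩ <;>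
          rcases hred b hb c hc hbc with ⟨h3, h4⟩ | ⟨h3, h4⟩
        · exact (hXY h3 h2).elim
        · exact (hac (hm' b h2 a h1 c h4 hab.1 hbc.1.symm)).elim
        · exact (hac (hm b h2 a h1 c h4 hab.1.symm hbc.1)).elim
        · exact (hXY h2 h3).elim
    · by_cases had : a = d
      · exact Or.inl had
      · have hside : (a ∈ X ∧ d ∈ X) ∨ (a ∈ Y ∧ d ∈ Y) := by
          have := hred a ha b hb hab
          have := hblue b hb c hc hbc
          have := hred c hc d hd hcd
          have := @hXY b
          have := @hXY c
          tauto
        rcases hside with ⟨h1, h2⟩ | ⟨h1, h2⟩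
        · exact Or.inr (Or.inr (Or.inl (hX a h1 d h2 had).1))
        · exact Or.inr (Or.inr (Or.inl (hY a h1 d h2 had).1))
  · obtain ⟨X, B, -, hX, -, hBX, hB, hdis, -, hE, -⟩ := h
    have hblue : ∀ a ∈ Z, ∀ b ∈ Z, CAdj G blue a b → ∃ x ∈ X, a ∈ B x ∧ b ∈ B x := by
      intro a ha b hb hab
      rcases hE a ha b hb hab.1 with ⟨h1, h2⟩ | h
      · exact (not_blue_and_red hab (hX a h1 b h2 hab.ne)).elim
      · exact h
    have hred : ∀ a ∈ Z, ∀ b ∈ Z, CAdj G red a b → a ∈ X ∧ b ∈ X := by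
      intro a ha b hb hab
      rcases hE a ha b hb hab.1 with h | ⟨x, hx, h1, h2⟩
      · exact h
      · exact (not_blue_and_red (hB x hx a h1 b h2 hab.ne) hab).elim
    refine ⟨fun i a ha b hb c hc hac hab hbc => ?_, fun a ha b hb c hc d hd hab hbc hcd => ?_⟩
    · rcases (by decide : ∀ i : Fin 2, i = blue ∨ i = red) i with rfl | rfl
      · obtain ⟨x, hx, h1, h2⟩ := hblue a ha b hb hab
        obtain ⟨y, hy, h3, h4⟩ := hblue b hb c hc hbc
        obtain rfl : x = y := by
          by_contra hne
          exact Set.disjoint_left.1 (hdis x hx y hy hne) h2 h3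
        exact hB x hx a h1 c h4 hac
      · exact hX a (hred a ha b hb hab).1 c (hred b hb c hc hbc).2 hac
    -- The middle edge `bc` would have to be both red and blue.
    · exact (not_blue_and_red hbc
        (hX b (hred a ha b hb hab).2 c (hred c hc d hd hcd).1 hbc.ne)).elim

theorem stmt12 [Fintype V] (G : EColGraph V 2) :
    InT G ↔ ∀ v : V,
      IsRBFenceOn G {u | G.graph.Reachable v u} ∨
      IsRBCliqueStarOn G {u | G.graph.Reachable v u} := by
  constructor
  · rintro ⟨⟨hb, hr⟩, hP⟩ v
    rw [isClusterGraph_mono_iff] at hb hr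
    by_cases h : ∃ p q p' q', G.graph.Reachable v p ∧ CAdj G blue p q ∧ CAdj G red p p' ∧
        CAdj G red q q'
    · obtain ⟨p, q, p', q', hv, hpq, hp, hq⟩ := h
      exact Or.inl (fence_of_red_red hb hr hP hpq hp hq hv)
    · right
      by_cases hred : ∃ w w', G.graph.Reachable v w ∧ CAdj G red w w'
      · obtain ⟨w, w', hv, hw⟩ := hred
        refine star_of_red_class hb hr hv fun x hx y hxy z hyz => ?_
        have hx' : ∃ x', CAdj G red x x' := by
          rcases hx with rfl | hx
          · exact ⟨w', hw⟩
          · exact ⟨w, hx.symm⟩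
        obtain ⟨x', hxx'⟩ := hx'
        exact h ⟨x, y, x', z, hv.trans (colorClass_reachable hx), hxy, hxx', hyz⟩
      · refine star_of_red_class hb hr (SimpleGraph.Reachable.refl v) fun x hx y hxy z hyz => ?_
        exact hred ⟨y, z, (colorClass_reachable hx).trans hxy.1.reachable, hyz⟩
  · intro h
    have trans : ∀ i, ColorTrans G i := fun i a b c hac hab hbc =>
      (local_conditions (h a)).1 i a (SimpleGraph.Reachable.refl a) b hab.1.reachable c
        (hab.1.reachable.trans hbc.1.reachable) hac hab hbc
    refine ⟨⟨isClusterGraph_mono_iff.2 (trans _), isClusterGraph_mono_iff.2 (trans _)⟩, ?_⟩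
    rintro ⟨a, b, c, d, -, -, had, -, -, -, hab, hab', hbc, hbc', hcd, hcd', hac, had', hbd⟩
    rcases (local_conditions (h a)).2 a (SimpleGraph.Reachable.refl a) b hab.reachable c
        (hab.reachable.trans hbc.reachable) d
        ((hab.reachable.trans hbc.reachable).trans hcd.reachable)
        ⟨hab, hab'⟩ ⟨hbc, hbc'⟩ ⟨hcd, hcd'⟩ with e | e | e | e
    · exact had e
    · exact hac e
    · exact had' e
    · exact hbd e
end
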